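/- arXiv:2510.05786 — 2 statements merged into one kernel-verified Lean document; each statement's English description precedes it below -/
import Mathlib

section
/- Let G = (V,E) be a DAMG, q_G : E → ℚ its path uniform weight function q_G(e) := π^G(t(e))/π^G(h(e)), and S ⊆ V∖Rt(G) a subset. Then the projection of q_G onto V∖S equals the path uniform weight function of the projected DAMG: (q_G)^{∖S} = q_{G^{∖S}} as functions on the edge set of G^{∖S}. -/
open scoped Classical

/-- A directed multigraph: finite sets of vertices/edges with tail and head maps. -/
structure MGraph (V E : Type*) where
  tl : E → V
  hd : E → V

namespace MGraph

variable {V E R A : Type*}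

/-- `G` is a directed acyclic multigraph (DAMG) if it admits a topological ordering,
i.e. a linear (injective) order on the vertices such that tails precede heads. -/
def IsDAMG (G : MGraph V E) : Prop :=
  ∃ ord : V → ℕ, Function.Injective ord ∧ ∀ e : E, ord (G.tl e) < ord (G.hd e)

/-- `G.IsPath x y l` : the list of edges `l` is a directed path from `x` to `y`. -/
def IsPath (G : MGraph V E) : V → V → List E → Prop
  | x, y, [] => x = y
  | x, y, e :: es => G.tl e = x ∧ G.IsPath (G.hd e) y es

/-- the set `E(x,y)` of edges from `x` to `y` -/
def edges (G : MGraph V E) (x y : V) : Set E := {e | G.tl e = x ∧ G.hd e = y}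

/-- there is a directed path from `x` to `y` (possibly trivial) -/
def Reaches (G : MGraph V E) (x y : V) : Prop := ∃ l : List E, G.IsPath x y l

/-- ancestors of `y` (including `y`) -/
def anc (G : MGraph V E) (y : V) : Set V := {x | G.Reaches x y}

/-- descendants of `x` (including `x`) -/
def desc (G : MGraph V E) (x : V) : Set V := {y | G.Reaches x y}

/-- parents of `y` -/
def pa (G : MGraph V E) (y : V) : Set V := {x | ∃ e : E, G.tl e = x ∧ G.hd e = y}

/-- roots (sources) of `G` -/
def roots (G : MGraph V E) : Set V := {x | G.pa x = ∅}

/-- leaves (sinks) of `G` -/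
def leaves (G : MGraph V E) : Set V := {x | ∀ e : E, G.tl e ≠ x}

/-- `π(x,y)` : the number of directed paths from `x` to `y` -/
noncomputable def nPaths (G : MGraph V E) (x y : V) : ℕ :=
  {l : List E | G.IsPath x y l}.ncard

/-- `π(y)` : the number of directed paths from roots to `y` -/
noncomputable def nPathsRt (G : MGraph V E) (y : V) : ℕ :=
  ∑ᶠ r ∈ G.roots, G.nPaths r y

/-- pairwise weight `q(x|y) := Σ_{e ∈ E(x,y)} q(e)` -/
noncomputable def pw [AddCommMonoid R] (G : MGraph V E) (q : E → R) (x y : V) : R :=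
  ∑ᶠ e ∈ G.edges x y, q e

/-- a weight function is normalized if pairwise weights into any non-root sum to 1 -/
def Normalized [CommRing R] (G : MGraph V E) (q : E → R) : Prop :=
  ∀ y : V, y ∉ G.roots → (∑ᶠ x : V, G.pw q x y) = 1

/-- `w` is the Möbius transform (synergy function) of `v` w.r.t. `G` -/
def IsMoebiusTransform [AddCommGroup A] (G : MGraph V E) (v w : V → A) : Prop :=
  ∀ x : V, w x = v x - ∑ᶠ y ∈ G.anc x \ {x}, w y

/-- `μ` is the Möbius function of `G` -/
def IsMoebiusFunction (G : MGraph V E) (μ : V → V → ℤ) : Prop :=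
  (∀ x y : V, x ∉ G.anc y → μ x y = 0) ∧
  (∀ x : V, μ x x = 1) ∧
  (∀ x y : V, x ∈ G.anc y → x ≠ y →
    μ x y = -(∑ᶠ z ∈ (G.desc x ∩ G.anc y) \ {y}, μ x z))

/-- `s` is the total path weight function of the edge weight function `q` -/
def IsTotalWeight [CommRing R] (G : MGraph V E) (q : E → R) (s : V → V → R) : Prop :=
  (∀ x y : V, y ∉ G.desc x → s x y = 0) ∧
  (∀ x : V, s x x = 1) ∧
  (∀ x y : V, y ∈ G.desc x → y ≠ x → s x y = ∑ᶠ z ∈ G.pa y, s x z * G.pw q z y)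

/-- `τ : V → R` is the extension of a root weight function via the recursion
`τ(y) = Σ_{z ∈ Pa(y)} τ(z)·ς(z,y)` for non-roots `y` -/
def IsRootExtension [CommRing R] (G : MGraph V E) (ς : E → R) (τ : V → R) : Prop :=
  ∀ y : V, y ∉ G.roots → τ y = ∑ᶠ z ∈ G.pa y, τ z * G.pw ς z y

/-- the list of vertices visited by a path starting at `x` -/
def pathVerts (G : MGraph V E) (x : V) (l : List E) : List V := x :: l.map G.hd

/-- `X` is a horizontal subset of `G` : every directed path from a root to a leaf
contains exactly one element of `X` -/
def Horizontal (G : MGraph V E) (X : Set V) : Prop :=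
  ∀ r ∈ G.roots, ∀ lf ∈ G.leaves, ∀ p : List E, G.IsPath r lf p →
    (G.pathVerts r p).countP (fun v => decide (v ∈ X)) = 1

/-- the path uniform weight function `q_G(e) := π(t(e))/π(h(e))` -/
noncomputable def pathUniform (G : MGraph V E) : E → ℚ :=
  fun e => (G.nPathsRt (G.tl e) : ℚ) / (G.nPathsRt (G.hd e) : ℚ)

/-- the unanimity value function centred at `y` -/
noncomputable def zeta [CommRing R] (G : MGraph V E) (y : V) : V → R :=
  fun x => if x ∈ G.desc y then (1 : R) else 0

/-! ### Projection onto the complement of a single element -/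

/-- the edge type of the projection `G^{∖z}` :
old edges avoiding `z`, together with a new edge for every pair of edges through `z` -/
def proj1E (G : MGraph V E) (z : V) : Type _ :=
  {e : E // G.tl e ≠ z ∧ G.hd e ≠ z} ⊕
  {p : E × E // G.hd p.1 = z ∧ G.tl p.2 = z ∧ G.tl p.1 ≠ z ∧ G.hd p.2 ≠ z}

/-- the projection `G^{∖z}` of `G` onto the complement of `z` -/
def proj1 (G : MGraph V E) (z : V) : MGraph {x : V // x ≠ z} (G.proj1E z) where
  tl := Sum.elim (fun e => ⟨G.tl e.1, e.2.1⟩) (fun p => ⟨G.tl p.1.1, p.2.2.2.1⟩)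
  hd := Sum.elim (fun e => ⟨G.hd e.1, e.2.2⟩) (fun p => ⟨G.hd p.1.2, p.2.2.2.2⟩)

/-- the projected weight function `q^{∖z}` -/
def proj1Q [CommRing R] (G : MGraph V E) (z : V) (q : E → R) : G.proj1E z → R :=
  Sum.elim (fun e => q e.1) (fun p => q p.1.1 * q p.1.2)

/-- the single-element projection `w^{∖z}(x) := w(x) + q(x|z)·w(z)` of a synergy function -/
noncomputable def wProjOne [CommRing R] [AddCommGroup A] [Module R A]
    (G : MGraph V E) (q : E → R) (w : V → A) (z : V) : {x : V // x ≠ z} → A :=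
  fun x => w x.1 + G.pw q x.1 z • w z

/-! ### Projection onto the complement of a subset -/

/-- consecutive edges of the list compose -/
def IsChain (G : MGraph V E) : List E → Prop
  | [] => True
  | [_] => True
  | e :: e' :: es => G.hd e = G.tl e' ∧ G.IsChain (e' :: es)

/-- the interior vertices of a path (all visited vertices except the endpoints) -/
def interior (G : MGraph V E) : List E → List V
  | [] => []
  | [_] => []
  | e :: e' :: es => G.hd e :: G.interior (e' :: es)

/-- an edge of the projection `G^{∖S}` : a nonempty directed path of `G` whose
interior vertices lie in `S` and whose endpoints lie outside `S`
(iterating `E^{∖z}(x,y) := E(x,y) ⊔ (E(x,z) × E(z,y))` over the elements of `S`) -/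
structure ProjEdge (G : MGraph V E) (S : Set V) where
  first : E
  rest : List E
  chain : G.IsChain (first :: rest)
  tl_notin : G.tl first ∉ S
  hd_notin : G.hd ((first :: rest).getLast (List.cons_ne_nil _ _)) ∉ S
  interior_mem : ∀ v ∈ G.interior (first :: rest), v ∈ S

/-- the projection `G^{∖S}` of `G` onto the complement of the subset `S` -/
def projG (G : MGraph V E) (S : Set V) : MGraph {x : V // x ∉ S} (G.ProjEdge S) where
  tl := fun p => ⟨G.tl p.first, p.tl_notin⟩
  hd := fun p => ⟨G.hd ((p.first :: p.rest).getLast (List.cons_ne_nil _ _)), p.hd_notin⟩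

/-- the projected weight function `q^{∖S}` (weights multiply along collapsed paths) -/
def projQ [CommRing R] (G : MGraph V E) (S : Set V) (q : E → R) :
    G.ProjEdge S → R :=
  fun p => ((p.first :: p.rest).map q).prod

/-! ### Iterated one-element projections of pairwise weights and synergy functions -/

/-- one projection step on pairwise weights: `q^{∖z}(x|y) = q(x|y) + q(x|z)·q(z|y)` -/
def pwStep [CommRing R] (Q : V → V → R) (z : V) : V → V → R :=
  fun x y => Q x y + Q x z * Q z y

/-- one projection step on a synergy function: `w^{∖z}(x) = w(x) + q(x|z)·w(z)` -/
def wStep [CommRing R] [AddCommGroup A] [Module R A]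
    (Q : V → V → R) (w : V → A) (z : V) : V → A :=
  fun x => w x + Q x z • w z

/-- iterated one-element projections along a list of vertices -/
def projIter [CommRing R] [AddCommGroup A] [Module R A] :
    List V → (V → V → R) → (V → A) → ((V → V → R) × (V → A))
  | [], Q, w => (Q, w)
  | z :: zs, Q, w => projIter zs (pwStep Q z) (wStep Q w z)

/-! ### Subgraph on a subset of vertices -/

/-- edges of `G` with both endpoints in `S` -/
def subE (G : MGraph V E) (S : Set V) : Type _ := {e : E // G.tl e ∈ S ∧ G.hd e ∈ S}

/-- the subgraph of `G` on the vertex subset `S` -/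
def subgraph (G : MGraph V E) (S : Set V) : MGraph ↥S (G.subE S) where
  tl := fun e => ⟨G.tl e.1, e.2.1⟩
  hd := fun e => ⟨G.hd e.1, e.2.2⟩

/-- the canonical identification `(V∖{z})∖{u} ≃ (V∖{u})∖{z}` -/
def swapCompl (z u : V) (hzu : z ≠ u) :
    {y : {x : V // x ≠ z} // y ≠ ⟨u, Ne.symm hzu⟩} ≃
      {y : {x : V // x ≠ u} // y ≠ ⟨z, hzu⟩} where
  toFun y := ⟨⟨y.1.1, fun h => y.2 (Subtype.ext h)⟩, fun h => y.1.2 (congrArg Subtype.val h)⟩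
  invFun y := ⟨⟨y.1.1, fun h => y.2 (Subtype.ext h)⟩, fun h => y.1.2 (congrArg Subtype.val h)⟩
  left_inv y := rfl
  right_inv y := rfl

end MGraph

namespace MGraph

theorem exists_root_path {V E : Type*} (G : MGraph V E) (hG : G.IsDAMG) (y : V) :
    ∃ r ∈ G.roots, ∃ l, G.IsPath r y l := by
  obtain ⟨ord, -, ho⟩ := hG
  have snoc : ∀ (l : List E) (a : V) (e : E), G.IsPath a (G.tl e) l →
      G.IsPath a (G.hd e) (l ++ [e]) := by
    intro l
    induction l with
    | nil => intro a e h; exact ⟨h.symm, rfl⟩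
    | cons b bs ih => intro a e h; exact ⟨h.1, ih _ _ h.2⟩
  induction hn : ord y using Nat.strong_induction_on generalizing y with
  | _ n ih =>
    by_cases hy : y ∈ G.roots
    · exact ⟨y, hy, [], rfl⟩
    · obtain ⟨x, e, hx, he⟩ := Set.nonempty_iff_ne_empty.mpr hy
      obtain ⟨r, hr, l, hl⟩ := ih (ord (G.tl e)) (by rw [← hn, ← he]; exact ho e) _ rfl
      exact ⟨r, hr, l ++ [e], he ▸ snoc l r e hl⟩

theorem path_length {V E : Type*} (G : MGraph V E) (ord : V → ℕ)
    (ho : ∀ e : E, ord (G.tl e) < ord (G.hd e)) (y : V) :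
    ∀ (l : List E) (x : V), G.IsPath x y l → ord x + l.length ≤ ord y := by
  intro l
  induction l with
  | nil => intro x h; have h : x = y := h; simp [h]
  | cons e es ih =>
    intro x h
    have h1 := ih _ h.2
    have h2 := ho e
    rw [h.1] at h2
    simp only [List.length_cons]
    omega

theorem paths_finite {V E : Type*} [Finite E] (G : MGraph V E) (hG : G.IsDAMG) (x y : V) :
    {l : List E | G.IsPath x y l}.Finite := by
  obtain ⟨ord, -, ho⟩ := hG
  refine (List.finite_length_le E (ord y)).subset ?_
  intro l hl
  have := G.path_length ord ho y l x hl
  simp only [Set.mem_ofPred_eq]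
  omega

theorem nPathsRt_ne_zero {V E : Type*} [Finite V] [Finite E] (G : MGraph V E)
    (hG : G.IsDAMG) (y : V) : G.nPathsRt y ≠ 0 := by
  obtain ⟨r, hr, l, hl⟩ := G.exists_root_path hG y
  have h1 : G.nPaths r y ≠ 0 := by
    unfold nPaths
    exact Set.ncard_ne_zero_of_mem (a := l) hl (G.paths_finite hG r y)
  unfold nPathsRt
  rw [finsum_mem_eq_finite_toFinset_sum _ (Set.toFinite G.roots)]
  intro h0
  rw [Finset.sum_eq_zero_iff] at h0
  exact h1 (h0 r (by simpa using hr))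

theorem path_to_root {V E : Type*} (G : MGraph V E) (b : V) (hb : b ∈ G.roots) :
    ∀ (l : List E) (a : V), G.IsPath a b l → l = [] := by
  intro l
  induction l with
  | nil => intros; rfl
  | cons e es ih =>
    intro a h
    have h1 := ih _ h.2
    subst h1
    have h2 : G.hd e = b := h.2
    have : G.tl e ∈ G.pa b := ⟨e, rfl, h2⟩
    rw [show G.pa b = ∅ from hb] at this
    exact this.elim

/-- the edge list underlying a path of the projection -/
def flat {V E : Type*} (G : MGraph V E) (S : Set V) : List (G.ProjEdge S) → List E
  | [] => []
  | p :: ps => (p.first :: p.rest) ++ G.flat S ps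

theorem chain_append {V E : Type*} (G : MGraph V E) (y : V) (X : List E) :
    ∀ (r : List E) (e : E), G.IsChain (e :: r) →
      G.IsPath (G.hd ((e :: r).getLast (List.cons_ne_nil _ _))) y X →
      G.IsPath (G.tl e) y ((e :: r) ++ X) := by
  intro r
  induction r with
  | nil => intro e _ h; exact ⟨rfl, h⟩
  | cons b bs ih =>
    intro e hc h
    refine ⟨rfl, ?_⟩
    rw [hc.1]
    exact ih b hc.2 (by simpa using h)

theorem flat_isPath {V E : Type*} (G : MGraph V E) (S : Set V) (y : {x : V // x ∉ S}) :
    ∀ (L : List (G.ProjEdge S)) (x : {x : V // x ∉ S}), (G.projG S).IsPath x y L →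
      G.IsPath x.1 y.1 (G.flat S L) := by
  intro L
  induction L with
  | nil => intro x h; exact congrArg Subtype.val h
  | cons p ps ih =>
    intro x h
    have h1 := ih _ h.2
    have h2 := G.chain_append y.1 _ p.rest p.first p.chain h1
    have h3 : G.tl p.first = x.1 := congrArg Subtype.val h.1
    rw [h3] at h2
    exact h2

theorem segment_unique {V E : Type*} (G : MGraph V E) (S : Set V) (X X' : List E) :
    ∀ (r r' : List E) (e e' : E),
      (∀ v ∈ G.interior (e :: r), v ∈ S) → (∀ v ∈ G.interior (e' :: r'), v ∈ S) →
      G.hd ((e :: r).getLast (List.cons_ne_nil _ _)) ∉ S →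
      G.hd ((e' :: r').getLast (List.cons_ne_nil _ _)) ∉ S →
      (e :: r) ++ X = (e' :: r') ++ X' → e = e' ∧ r = r' ∧ X = X' := by
  intro r
  induction r with
  | nil =>
    intro r' e e' h1 h2 h3 h4 h
    obtain ⟨h0, ht⟩ := List.cons.inj h
    subst h0
    cases r' with
    | nil => exact ⟨rfl, rfl, ht⟩
    | cons b bs => exact (h3 (h2 (G.hd e) (List.mem_cons_self))).elim
  | cons c cs ih =>
    intro r' e e' h1 h2 h3 h4 h
    obtain ⟨h0, ht⟩ := List.cons.inj h
    subst h0
    cases r' with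
    | nil => exact (h4 (h1 (G.hd e) (List.mem_cons_self))).elim
    | cons b bs =>
      obtain ⟨rfl, rfl, rfl⟩ := ih bs c b (fun v hv => h1 v (List.mem_cons_of_mem _ hv))
        (fun v hv => h2 v (List.mem_cons_of_mem _ hv)) (by simpa using h3) (by simpa using h4) ht
      exact ⟨rfl, rfl, rfl⟩

theorem flat_injective {V E : Type*} (G : MGraph V E) (S : Set V) :
    Function.Injective (G.flat S) := by
  intro L
  induction L with
  | nil =>
    intro L' h
    cases L' with
    | nil => rfl
    | cons p ps => simp [flat] at h
  | cons p ps ih =>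
    intro L' h
    cases L' with
    | nil => simp [flat] at h
    | cons p' ps' =>
      obtain ⟨h1, h2, h3⟩ := G.segment_unique S _ _ p.rest p'.rest p.first p'.first
        p.interior_mem p'.interior_mem p.hd_notin p'.hd_notin h
      have h4 := ih h3
      cases p
      cases p'
      simp only at h1 h2
      subst h1 h2 h4
      rfl

theorem split_path {V E : Type*} (G : MGraph V E) (S : Set V) (y : V) (hy : y ∉ S) :
    ∀ (es : List E) (e : E), G.IsPath (G.hd e) y es →
      ∃ rest X, es = rest ++ X ∧ G.IsChain (e :: rest) ∧
        G.hd ((e :: rest).getLast (List.cons_ne_nil _ _)) ∉ S ∧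
        (∀ v ∈ G.interior (e :: rest), v ∈ S) ∧
        G.IsPath (G.hd ((e :: rest).getLast (List.cons_ne_nil _ _))) y X := by
  intro es
  induction es with
  | nil =>
    intro e h
    have h' : G.hd e = y := h
    exact ⟨[], [], rfl, trivial, by simpa [h'] using hy, by simp [interior], h⟩
  | cons b bs ih =>
    intro e h
    by_cases hS : G.hd e ∈ S
    · obtain ⟨rest, X, h1, h2, h3, h4, h5⟩ := ih b h.2
      refine ⟨b :: rest, X, by simp [h1], ⟨h.1.symm, h2⟩, by simpa using h3, ?_, by simpa using h5⟩
      intro v hv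
      rcases List.mem_cons.mp hv with rfl | hv
      · exact hS
      · exact h4 v hv
    · exact ⟨[], b :: bs, rfl, trivial, by simpa using hS, by simp [interior], h⟩

theorem flat_surj {V E : Type*} (G : MGraph V E) (S : Set V) (y : {x : V // x ∉ S})
    (l : List E) (x : {x : V // x ∉ S}) (h : G.IsPath x.1 y.1 l) :
    ∃ L, (G.projG S).IsPath x y L ∧ G.flat S L = l := by
  induction hn : l.length using Nat.strong_induction_on generalizing l x with
  | _ n ih =>
    cases l with
    | nil => exact ⟨[], Subtype.ext h, rfl⟩
    | cons e es =>
      obtain ⟨rest, X, h1, h2, h3, h4, h5⟩ := G.split_path S y.1 y.2 es e h.2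
      obtain ⟨L, hL, hX⟩ := ih X.length (by rw [← hn, h1]; simp) X ⟨_, h3⟩ h5 rfl
      refine ⟨⟨e, rest, h2, by rw [h.1]; exact x.2, h3, h4⟩ :: L, ⟨Subtype.ext h.1, hL⟩, ?_⟩
      simp [flat, hX, h1]

theorem nPaths_proj {V E : Type*} (G : MGraph V E) (S : Set V) (x y : {x : V // x ∉ S}) :
    (G.projG S).nPaths x y = G.nPaths x.1 y.1 := by
  unfold nPaths
  rw [← Set.ncard_image_of_injective _ (G.flat_injective S)]
  congr 1
  ext l
  constructor
  · rintro ⟨L, hL, rfl⟩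
    exact G.flat_isPath S y L x hL
  · intro hl
    exact G.flat_surj S y l x hl

theorem roots_proj {V E : Type*} (G : MGraph V E) (hG : G.IsDAMG) (S : Set V)
    (hS : ∀ z ∈ S, z ∉ G.roots) (x : {x : V // x ∉ S}) :
    x ∈ (G.projG S).roots ↔ x.1 ∈ G.roots := by
  constructor
  · intro hx
    obtain ⟨r, hr, l, hl⟩ := G.exists_root_path hG x.1
    obtain ⟨L, hL, -⟩ := G.flat_surj S x l ⟨r, fun h => hS r h hr⟩ hl
    have := (G.projG S).path_to_root x hx L _ hL
    subst this
    have h : (⟨r, _⟩ : {x : V // x ∉ S}) = x := hL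
    rw [← h]
    exact hr
  · intro hx
    refine Set.eq_empty_of_forall_notMem ?_
    rintro z ⟨p, -, hp⟩
    have h : G.hd ((p.first :: p.rest).getLast (List.cons_ne_nil _ _)) = x.1 :=
      congrArg Subtype.val hp
    have h2 : G.tl ((p.first :: p.rest).getLast (List.cons_ne_nil _ _)) ∈ G.pa x.1 := ⟨_, rfl, h⟩
    rw [show G.pa x.1 = ∅ from hx] at h2
    exact h2

theorem nPathsRt_proj {V E : Type*} (G : MGraph V E) (hG : G.IsDAMG) (S : Set V)
    (hS : ∀ z ∈ S, z ∉ G.roots) (y : {x : V // x ∉ S}) :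
    (G.projG S).nPathsRt y = G.nPathsRt y.1 := by
  unfold nPathsRt
  refine finsum_mem_eq_of_bijOn Subtype.val ⟨?_, Subtype.val_injective.injOn, ?_⟩ ?_
  · intro x hx
    exact (G.roots_proj hG S hS x).mp hx
  · intro r hr
    exact ⟨⟨r, fun h => hS r h hr⟩, (G.roots_proj hG S hS _).mpr hr, rfl⟩
  · intro x _
    exact G.nPaths_proj S x y

theorem chain_prod {V E : Type*} (G : MGraph V E) (f : V → ℚ) (hf : ∀ v, f v ≠ 0) :
    ∀ (r : List E) (e : E), G.IsChain (e :: r) →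
      ((e :: r).map (fun e => f (G.tl e) / f (G.hd e))).prod =
        f (G.tl e) / f (G.hd ((e :: r).getLast (List.cons_ne_nil _ _))) := by
  intro r
  induction r with
  | nil => intro e _; simp
  | cons b bs ih =>
    intro e h
    rw [List.map_cons, List.prod_cons, ih b h.2, h.1, List.getLast_cons (List.cons_ne_nil _ _)]
    exact div_mul_div_cancel₀ (hf _)

end MGraph

/-- **Path uniform weights commute with projections.**
For a DAMG `G` and a subset `S ⊆ V∖Rt(G)`, the projection of the path uniform
weight function `q_G` onto the complement of `S` equals the path uniform weight
function of the projected DAMG: `(q_G)^{∖S} = q_{G^{∖S}}` on the edges of `G^{∖S}`. -/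
theorem path_uniform_proj_commute
    {V E : Type*} [Finite V] [Finite E]
    (G : MGraph V E) (hG : G.IsDAMG)
    (S : Set V) (hS : ∀ z ∈ S, z ∉ G.roots) :
    ∀ e : G.ProjEdge S, G.projQ S G.pathUniform e = (G.projG S).pathUniform e := by
  intro e
  have h := G.chain_prod (fun v => (G.nPathsRt v : ℚ))
    (fun v => Nat.cast_ne_zero.mpr (G.nPathsRt_ne_zero hG v)) e.rest e.first e.chain
  unfold MGraph.projQ
  refine Eq.trans h ?_
  unfold MGraph.pathUniform
  rw [G.nPathsRt_proj hG S hS, G.nPathsRt_proj hG S hS]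
  rfl
end

section
/- Let G = (V,E) be a DAMG, R a commutative ring, q : E → R a normalized weight function with total path weight function s, A an R-module, and v : V → A a value function with Möbius transform w = v'. Define the Shapley value at each root r ∈ Rt(G) by Sh_r^{(G,q)}(v) := w^{∖(V∖Rt(G))}(r). Then: (1) (total path weight formula) Sh_r^{(G,q)}(v) = Σ_{y ∈ V} s(r|y) · v'(y); (2) (efficiency) Σ_{r ∈ Rt(G)} Sh_r^{(G,q)}(v) = Σ_{x ∈ V} v'(x); (3) (null root) if r ∈ Rt(G) satisfies v'(x) = 0 for all x ∈ Desc(r), then Sh_r^{(G,q)}(v) = 0; (4) (R-linearity) Sh_r^{(G,q)}(c₁·v₁ + c₂·v₂) = c₁·Sh_r^{(G,q)}(v₁) + c₂·Sh_r^{(G,q)}(v₂) for all c₁, c₂ ∈ R and v₁, v₂ : V → A; (5) (projection) for every subset S ⊆ V∖Rt(G) and every r ∈ Rt(G), Sh_r^{(G,q)}(v) = Sh_r^{(G^{∖S}, q^{∖S})}(v^{∖S}), where v^{∖S}(y) := Σ_{x ∈ Anc^{G^{∖S}}(y)} w^{∖S}(x). -/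
open scoped Classical

namespace MGraph

variable {V E R A : Type*}

/-- Acyclicity of a weight matrix. -/
def Acyc [CommRing R] (ord : V → ℕ) (Q : V → V → R) : Prop :=
  ∀ x y, ord y ≤ ord x → Q x y = 0

theorem acyc_step [CommRing R] {ord : V → ℕ} {Q : V → V → R} (h : Acyc ord Q) (z : V) :
    Acyc ord (pwStep Q z) := by
  intro x y hxy
  unfold pwStep
  rw [h x y hxy, zero_add]
  by_cases h1 : ord z ≤ ord x
  · rw [h x z h1, zero_mul]
  · rw [h z y (by omega), mul_zero]

theorem projIter_list [CommRing R] [AddCommGroup A] [Module R A] {ord : V → ℕ}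
    (l : List V) : ∀ (Q : V → V → R) (w : V → A), Acyc ord Q → ∀ x,
    (projIter l Q w).2 x = w x + (l.map (fun z => Q x z • (projIter l Q w).2 z)).sum := by
  induction l with
  | nil => intro Q w _ x; simp [projIter]
  | cons z zs ih =>
    intro Q w h x
    have ih' := ih (pwStep Q z) (wStep Q w z) (acyc_step h z)
    change (projIter zs (pwStep Q z) (wStep Q w z)).2 x = w x +
      ((z :: zs).map (fun y => Q x y • (projIter zs (pwStep Q z) (wStep Q w z)).2 y)).sum
    set W := (projIter zs (pwStep Q z) (wStep Q w z)).2 with hW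
    have key : ∀ x, W x = w x + Q x z • w z + (zs.map (fun y => Q x y • W y)).sum
        + Q x z • (zs.map (fun y => Q z y • W y)).sum := by
      intro x
      rw [ih' x, add_assoc (w x + Q x z • w z)]
      unfold wStep
      congr 1
      rw [List.smul_sum, List.map_map, ← List.sum_map_add]
      congr 1
      apply List.map_congr_left
      intro y _
      simp [pwStep, add_smul, mul_smul]
    have hz := key z
    rw [h z z le_rfl] at hz
    simp only [zero_smul, add_zero] at hz
    rw [List.map_cons, List.sum_cons, hz, key x, smul_add]
    abel

theorem projIter_sum [Fintype V] [CommRing R] [AddCommGroup A] [Module R A] {ord : V → ℕ}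
    (l : List V) (hl : l.Nodup) (T : Set V) (hT : ∀ z, z ∈ l ↔ z ∈ T)
    (Q : V → V → R) (w : V → A) (h : Acyc ord Q) (x : V) :
    (projIter l Q w).2 x = w x + ∑ z, if z ∈ T then Q x z • (projIter l Q w).2 z else 0 := by
  conv_lhs => rw [projIter_list l Q w h x]
  rw [← List.sum_toFinset _ hl, ← Finset.sum_filter]
  congr 2
  ext z
  simp [hT]

theorem uniq [Fintype V] [CommRing R] [AddCommGroup A] [Module R A] {ord : V → ℕ}
    (T : Set V) (Q : V → V → R) (h : Acyc ord Q) (c f g : V → A)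
    (hf : ∀ x, f x = c x + ∑ z, if z ∈ T then Q x z • f z else 0)
    (hg : ∀ x, g x = c x + ∑ z, if z ∈ T then Q x z • g z else 0) (x : V) : f x = g x := by
  have hM : ∀ x, ord x ≤ Finset.univ.sup ord := fun x => Finset.le_sup (Finset.mem_univ x)
  generalize Finset.univ.sup ord = M at hM
  induction hn : M - ord x using Nat.strong_induction_on generalizing x with
  | _ n ih =>
    rw [hf x, hg x]
    congr 1
    apply Finset.sum_congr rfl
    intro z _
    by_cases hz : ord z ≤ ord x
    · rw [h x z hz]; simp
    · have := hM z
      have := hM x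
      rw [ih (M - ord z) (by omega) z rfl]

theorem acyc_pw [CommRing R] (G : MGraph V E) (q : E → R) {ord : V → ℕ}
    (h : ∀ e, ord (G.tl e) < ord (G.hd e)) : Acyc ord (G.pw q) := by
  intro x y hxy
  unfold pw
  apply finsum_mem_eq_zero_of_forall_eq_zero
  rintro e ⟨h1, h2⟩
  have := h e
  rw [h1, h2] at this
  omega

theorem reaches_snoc (G : MGraph V E) {x : V} (e : E) (h : G.Reaches x (G.tl e)) :
    G.Reaches x (G.hd e) := by
  obtain ⟨l, hl⟩ := h
  refine ⟨l ++ [e], ?_⟩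
  induction l generalizing x with
  | nil => exact ⟨hl.symm, rfl⟩
  | cons a as ih => exact ⟨hl.1, ih hl.2⟩

theorem reaches_root (G : MGraph V E) {x y : V} (h : G.Reaches x y) (hy : y ∈ G.roots) :
    x = y := by
  obtain ⟨l, hl⟩ := h
  have aux : ∀ (l : List E) (e : E) x, G.IsPath x y (e :: l) → ∃ e, G.hd e = y := by
    intro l
    induction l with
    | nil => intro e x h; exact ⟨e, h.2⟩
    | cons a as ih => intro e x h; exact ih a _ h.2
  cases l with
  | nil => exact hl
  | cons e es =>
    obtain ⟨e', he'⟩ := aux _ _ _ hl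
    exact absurd (show G.tl e' ∈ G.pa y from ⟨e', rfl, he'⟩) (by
      rw [show G.pa y = ∅ from hy]; simp)

theorem pw_eq_zero [CommRing R] (G : MGraph V E) (q : E → R) {x y : V}
    (h : x ∉ G.pa y) : G.pw q x y = 0 := by
  unfold pw
  apply finsum_mem_eq_zero_of_forall_eq_zero
  rintro e ⟨h1, h2⟩
  exact absurd ⟨e, h1, h2⟩ h

theorem total_rec [Fintype V] [CommRing R] (G : MGraph V E) (q : E → R) (s : V → V → R)
    (hs : G.IsTotalWeight q s) {x y : V} (hxy : y ≠ x) :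
    s x y = ∑ z, s x z * G.pw q z y := by
  by_cases hd : y ∈ G.desc x
  · rw [hs.2.2 x y hd hxy, ← finsum_eq_sum_of_fintype]
    rw [finsum_mem_def]
    apply finsum_congr
    intro z
    by_cases hz : z ∈ G.pa y
    · simp [hz]
    · simp [hz, pw_eq_zero G q hz]
  · rw [hs.1 x y hd]
    symm
    apply Finset.sum_eq_zero
    intro z _
    by_cases hz : z ∈ G.pa y
    · rw [hs.1 x z, zero_mul]
      intro h
      obtain ⟨e, rfl, rfl⟩ := hz
      exact hd (reaches_snoc G e h)
    · rw [pw_eq_zero G q hz, mul_zero]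

theorem sum_split [Fintype V] [AddCommGroup A] (T : Set V) (f : V → A) :
    ∑ x, f x = (∑ x, if x ∈ T then f x else 0) + ∑ x, if x ∈ T then 0 else f x := by
  rw [← Finset.sum_add_distrib]
  apply Finset.sum_congr rfl
  intro x _
  split_ifs <;> simp

/-- pairing a synergy function with a left weight -/
theorem pairing [Fintype V] [CommRing R] [AddCommGroup A] [Module R A] (T : Set V)
    (Q : V → V → R) (w W : V → A) (t : V → R)
    (hW : ∀ x, W x = w x + ∑ z, if z ∈ T then Q x z • W z else 0)
    (ht : ∀ z ∈ T, t z = ∑ y, t y * Q y z) :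
    ∑ y, t y • w y = ∑ y, if y ∈ T then 0 else t y • W y := by
  have h1 : ∀ y, t y • w y = t y • W y - ∑ z, if z ∈ T then (t y * Q y z) • W z else 0 := by
    intro y
    conv_rhs => rw [hW y]
    rw [smul_add, Finset.smul_sum]
    have : ∀ z, t y • (if z ∈ T then Q y z • W z else 0)
        = if z ∈ T then (t y * Q y z) • W z else 0 := by
      intro z; split_ifs <;> simp [mul_smul]
    simp [this]
  rw [Finset.sum_congr rfl (fun y _ => h1 y), Finset.sum_sub_distrib, Finset.sum_comm,
    sum_split T (fun y => t y • W y)]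
  have h2 : ∀ z, (∑ y, if z ∈ T then (t y * Q y z) • W z else 0)
      = if z ∈ T then t z • W z else 0 := by
    intro z
    split_ifs with hz
    · rw [← Finset.sum_smul, ← ht z hz]
    · simp
  simp [h2]

/-- good lists: nonempty paths from `x` to `y` with interior in `S` -/
def Good (G : MGraph V E) (S : Set V) : V → V → List E → Prop
  | _, _, [] => False
  | x, y, [e] => G.tl e = x ∧ G.hd e = y
  | x, y, e :: e' :: es => G.tl e = x ∧ G.hd e ∈ S ∧ G.Good S (G.hd e) y (e' :: es)

theorem good_length (G : MGraph V E) (S : Set V) {ord : V → ℕ}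
    (h : ∀ e, ord (G.tl e) < ord (G.hd e)) {x y : V} (L : List E) (hL : G.Good S x y L) :
    ord x + L.length ≤ ord y ∧ ord x < ord y := by
  induction L generalizing x with
  | nil => exact hL.elim
  | cons e es ih =>
    cases es with
    | nil =>
      obtain ⟨rfl, rfl⟩ := hL
      have := h e
      simp; omega
    | cons e' es =>
      obtain ⟨rfl, -, h3⟩ := hL
      have := h e
      have := ih h3
      simp at *; omega

/-- total weight of good lists -/
noncomputable def NW [CommRing R] (G : MGraph V E) (S : Set V) (q : E → R) (x y : V) : R :=
  ∑ᶠ L ∈ {L | G.Good S x y L}, (L.map q).prod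

theorem good_finite [Finite E] (G : MGraph V E) (S : Set V) {ord : V → ℕ}
    (h : ∀ e, ord (G.tl e) < ord (G.hd e)) (x y : V) : {L | G.Good S x y L}.Finite := by
  apply (List.finite_length_le E (ord y)).subset
  intro L hL
  have := good_length G S h L hL
  simp only [Set.mem_ofPred_eq]
  omega

theorem acyc_NW [CommRing R] (G : MGraph V E) (S : Set V) (q : E → R) {ord : V → ℕ}
    (h : ∀ e, ord (G.tl e) < ord (G.hd e)) : Acyc ord (G.NW S q) := by
  intro x y hxy
  unfold NW
  apply finsum_mem_eq_zero_of_forall_eq_zero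
  intro L hL
  have := good_length G S h L hL
  omega

theorem NW_rec [Fintype V] [Finite E] [CommRing R] (G : MGraph V E) (S : Set V) (q : E → R)
    {ord : V → ℕ} (h : ∀ e, ord (G.tl e) < ord (G.hd e)) (x y : V) :
    G.NW S q x y = G.pw q x y + ∑ z, if z ∈ S then G.pw q x z * G.NW S q z y else 0 := by
  have hset : {L | G.Good S x y L} = ((fun e => [e]) '' G.edges x y) ∪
      ⋃ e ∈ {e | G.tl e = x ∧ G.hd e ∈ S}, (List.cons e) '' {L | G.Good S (G.hd e) y L} := by
    ext L
    simp only [Set.mem_union, Set.mem_iUnion, Set.mem_image, Set.mem_ofPred_eq, edges]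
    constructor
    · intro hL
      match L, hL with
      | [e], hL => exact Or.inl ⟨e, hL, rfl⟩
      | e :: e' :: es, hL => exact Or.inr ⟨e, ⟨hL.1, hL.2.1⟩, _, hL.2.2, rfl⟩
    · rintro (⟨e, he, rfl⟩ | ⟨e, ⟨h1, h2⟩, L', hL', rfl⟩)
      · exact he
      · match L', hL' with
        | e' :: es, hL' => exact ⟨h1, h2, hL'⟩
  have hfin : ∀ e, ((List.cons e) '' {L | G.Good S (G.hd e) y L}).Finite :=
    fun e => (good_finite G S h _ _).image _
  unfold NW
  rw [hset, finsum_mem_union]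
  · congr 1
    · rw [finsum_mem_image (by intro a _ b _ hab; simpa using hab)]
      simp [pw]
    · rw [finsum_mem_biUnion]
      · have h1 : ∀ e, (∑ᶠ L ∈ (List.cons e) '' {L | G.Good S (G.hd e) y L}, (L.map q).prod)
            = q e * G.NW S q (G.hd e) y := by
          intro e
          rw [finsum_mem_image (by intro a _ b _ hab; simpa using hab)]
          simp only [List.map_cons, List.prod_cons]
          rw [NW, mul_finsum_mem' _ _ (good_finite G S h _ _)]
        simp only [h1]
        have h2 : {e | G.tl e = x ∧ G.hd e ∈ S} = ⋃ z ∈ S, G.edges x z := by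
          ext e; simp [edges]
        rw [h2, finsum_mem_biUnion]
        · rw [finsum_mem_def, finsum_eq_sum_of_fintype]
          apply Finset.sum_congr rfl
          intro z _
          rw [Set.indicator_apply]
          split_ifs
          · rw [pw, finsum_mem_mul' _ _ (Set.toFinite _)]
            apply finsum_mem_congr rfl
            rintro e ⟨-, rfl⟩
            rfl
          · rfl
        · intro a _ b _ hab
          rw [Function.onFun, Set.disjoint_left]
          rintro e ⟨-, h1⟩ ⟨-, h2⟩
          exact hab (h1.symm.trans h2)
        · exact Set.toFinite _
        · intro _ _; exact Set.toFinite _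
      · intro a _ b _ hab
        rw [Function.onFun, Set.disjoint_left]
        rintro L ⟨L1, -, rfl⟩ ⟨L2, -, h2⟩
        simp at h2
        exact hab h2.1.symm
      · exact Set.toFinite _
      · intro e _; exact hfin e
  · rw [Set.disjoint_left]
    rintro L ⟨e, -, rfl⟩ hL
    simp only [Set.mem_iUnion] at hL
    obtain ⟨e', -, L', hL', h2⟩ := hL
    simp at h2
    rw [h2.2] at hL'
    exact hL'
  · exact Set.toFinite _
  · exact (Set.toFinite _).biUnion (fun e _ => hfin e)

theorem good_iff (G : MGraph V E) (S : Set V) (e : E) (es : List E) (x y : V) :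
    G.Good S x y (e :: es) ↔ G.tl e = x ∧ G.IsChain (e :: es) ∧
      G.hd ((e :: es).getLast (List.cons_ne_nil _ _)) = y ∧
      ∀ v ∈ G.interior (e :: es), v ∈ S := by
  induction es generalizing e x with
  | nil => simp [Good, IsChain, interior]
  | cons e' es ih =>
    simp only [Good, IsChain, interior, ih, List.mem_cons, forall_eq_or_imp,
      List.getLast_cons_cons]
    constructor
    · rintro ⟨a, b, c, d, f, g⟩; exact ⟨a, ⟨c.symm, d⟩, f, b, g⟩
    · rintro ⟨a, ⟨c, d⟩, f, b, g⟩; exact ⟨a, b, c.symm, d, f, g⟩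

theorem projG_pw [CommRing R] (G : MGraph V E) (S : Set V) (q : E → R)
    (x y : {x : V // x ∉ S}) : (G.projG S).pw (G.projQ S q) x y = G.NW S q x.1 y.1 := by
  unfold pw NW
  apply finsum_mem_eq_of_bijOn (fun p => p.first :: p.rest)
  · refine ⟨?_, ?_, ?_⟩
    · rintro p ⟨h1, h2⟩
      exact (good_iff G S _ _ _ _).2 ⟨congrArg Subtype.val h1, p.chain,
        congrArg Subtype.val h2, p.interior_mem⟩
    · rintro ⟨a, b, _, _, _, _⟩ - ⟨a', b', _, _, _, _⟩ - h
      simp at h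
      obtain ⟨rfl, rfl⟩ := h
      rfl
    · intro L hL
      match L, hL with
      | e :: es, hL =>
        obtain ⟨h1, h2, h3, h4⟩ := (good_iff G S _ _ _ _).1 hL
        exact ⟨⟨e, es, h2, h1 ▸ x.2, h3 ▸ y.2, h4⟩, ⟨Subtype.ext h1, Subtype.ext h3⟩, rfl⟩
  · intro p _; rfl

theorem moebius_lin [Finite V] [CommRing R] [AddCommGroup A] [Module R A]
    (G : MGraph V E) {ord : V → ℕ} (h : ∀ e, ord (G.tl e) < ord (G.hd e)) (c₁ c₂ : R)
    (v₁ v₂ w₁ w₂ w₁₂ : V → A) (h1 : G.IsMoebiusTransform v₁ w₁)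
    (h2 : G.IsMoebiusTransform v₂ w₂)
    (h3 : G.IsMoebiusTransform (fun x => c₁ • v₁ x + c₂ • v₂ x) w₁₂) (x : V) :
    w₁₂ x = c₁ • w₁ x + c₂ • w₂ x := by
  have hreach : ∀ (l : List E) x y, G.IsPath x y l → x = y ∨ ord x < ord y := by
    intro l
    induction l with
    | nil => intro x y h; exact Or.inl h
    | cons e es ih =>
      rintro x y ⟨rfl, h'⟩
      have := h e
      rcases ih _ _ h' with rfl | h''
      · exact Or.inr this
      · exact Or.inr (this.trans h'')
  induction hn : ord x using Nat.strong_induction_on generalizing x with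
  | _ n ih =>
    rw [h1 x, h2 x, h3 x]
    have : (∑ᶠ y ∈ G.anc x \ {x}, w₁₂ y) = ∑ᶠ y ∈ G.anc x \ {x}, (c₁ • w₁ y + c₂ • w₂ y) := by
      apply finsum_mem_congr rfl
      rintro y ⟨⟨l, hl⟩, hy⟩
      rcases hreach l _ _ hl with rfl | h'
      · exact absurd rfl hy
      · exact ih _ (hn ▸ h') y rfl
    have hsm : ∀ (c : R) (f : V → A), c • (∑ᶠ y ∈ G.anc x \ {x}, f y)
        = ∑ᶠ y ∈ G.anc x \ {x}, c • f y := fun c f =>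
      (DistribSMul.toAddMonoidHom A c).map_finsum_mem f (Set.toFinite _)
    rw [this, finsum_mem_add_distrib (Set.toFinite _), smul_sub, smul_sub, hsm, hsm]
    dsimp only
    abel

theorem projG_root (G : MGraph V E) (S : Set V) (x : {x : V // x ∉ S}) (h : x.1 ∈ G.roots) :
    x ∈ (G.projG S).roots := by
  change (G.projG S).pa x = ∅
  rw [Set.eq_empty_iff_forall_notMem]
  rintro y ⟨p, -, hp⟩
  have : G.tl ((p.first :: p.rest).getLast (List.cons_ne_nil _ _)) ∈ G.pa x.1 :=
    ⟨_, rfl, congrArg Subtype.val hp⟩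
  rw [show G.pa x.1 = ∅ from h] at this
  exact this

end MGraph

/-- **Properties of Shapley values on `R`-PDAMGs.**
Let `q` be a normalized weight function on the DAMG `G` with total path weight
function `s`, and `w` the Möbius transform of `v`. The Shapley value of `v` at a
root `r` is `Sh_r^{(G,q)}(v) := w^{∖(V∖Rt(G))}(r)`, the iterated projection of
`w` onto the complement of the non-roots (enumerated by the duplicate-free list
`l`). Then: (1) total path weight formula; (2) efficiency; (3) null root;
(4) `R`-linearity; (5) invariance under projection onto the complement of any
`S ⊆ V∖Rt(G)`. -/
theorem shapley_values_properties
    {V E R A : Type*} [Finite V] [Finite E] [CommRing R] [AddCommGroup A] [Module R A]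
    (G : MGraph V E) (hG : G.IsDAMG)
    (q : E → R) (hq : G.Normalized q)
    (s : V → V → R) (hs : G.IsTotalWeight q s)
    (v w : V → A) (hw : G.IsMoebiusTransform v w)
    (l : List V) (hnd : l.Nodup) (hmem : ∀ z : V, z ∈ l ↔ z ∉ G.roots) :
    -- (1) total path weight formula
    (∀ r ∈ G.roots,
      (MGraph.projIter l (G.pw q) w).2 r = ∑ᶠ y : V, s r y • w y) ∧
    -- (2) efficiency
    ((∑ᶠ r ∈ G.roots, (MGraph.projIter l (G.pw q) w).2 r) = ∑ᶠ x : V, w x) ∧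
    -- (3) null root
    (∀ r ∈ G.roots, (∀ x ∈ G.desc r, w x = 0) →
      (MGraph.projIter l (G.pw q) w).2 r = 0) ∧
    -- (4) R-linearity
    (∀ (c₁ c₂ : R) (v₁ v₂ w₁ w₂ w₁₂ : V → A),
      G.IsMoebiusTransform v₁ w₁ → G.IsMoebiusTransform v₂ w₂ →
      G.IsMoebiusTransform (fun x => c₁ • v₁ x + c₂ • v₂ x) w₁₂ →
      ∀ r ∈ G.roots,
        (MGraph.projIter l (G.pw q) w₁₂).2 r =
          c₁ • (MGraph.projIter l (G.pw q) w₁).2 r +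
            c₂ • (MGraph.projIter l (G.pw q) w₂).2 r) ∧
    -- (5) projection property: `Sh_r^{(G,q)}(v) = Sh_r^{(G^{∖S},q^{∖S})}(v^{∖S})`,
    -- where the Möbius transform of `v^{∖S}` w.r.t. `G^{∖S}` is `w^{∖S}`
    (∀ (S : Set V) (hS : ∀ z ∈ S, z ∉ G.roots)
      (lS : List V), lS.Nodup → (∀ z : V, z ∈ lS ↔ z ∈ S) →
      ∀ (l' : List {x : V // x ∉ S}), l'.Nodup →
        (∀ x : {x : V // x ∉ S}, x ∈ l' ↔ x ∉ (G.projG S).roots) →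
      ∀ (r : V) (hr : r ∈ G.roots),
        (MGraph.projIter l (G.pw q) w).2 r =
          (MGraph.projIter l' ((G.projG S).pw (G.projQ S q))
              (fun x => (MGraph.projIter lS (G.pw q) w).2 x.1)).2
            ⟨r, fun hmemS => hS r hmemS hr⟩) := by
  classical
  cases nonempty_fintype V
  obtain ⟨ord, -, hord⟩ := hG
  have hac := MGraph.acyc_pw G q hord
  obtain ⟨T, hT⟩ : ∃ T : Set V, ∀ z, z ∈ T ↔ z ∉ G.roots := ⟨G.rootsᶜ, fun _ => Iff.rfl⟩
  have hW : ∀ (w : V → A) (x : V), (MGraph.projIter l (G.pw q) w).2 x = w x + ∑ z,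
      if z ∈ T then G.pw q x z • (MGraph.projIter l (G.pw q) w).2 z else 0 :=
    fun w => MGraph.projIter_sum l hnd T (fun z => (hmem z).trans (hT z).symm) (G.pw q) w hac
  have h1 : ∀ (w : V → A), ∀ r ∈ G.roots,
      (MGraph.projIter l (G.pw q) w).2 r = ∑ᶠ y : V, s r y • w y := by
    intro w r hr
    rw [finsum_eq_sum_of_fintype, MGraph.pairing T (G.pw q) w _ (s r) (hW w)]
    · rw [Finset.sum_eq_single r]
      · simp [hT, hr, hs.2.1]
      · intro y _ hy
        split_ifs with hyr
        · rfl
        · rw [hs.1 r y, zero_smul]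
          intro hd
          exact hy (MGraph.reaches_root G hd (not_not.1 (fun h => hyr ((hT y).2 h)))).symm
      · simp
    · intro z hz
      apply MGraph.total_rec G q s hs
      rintro rfl
      exact (hT _).1 hz hr
  refine ⟨h1 w, ?_, ?_, ?_, ?_⟩
  · have := MGraph.pairing T (G.pw q) w _ (fun _ => (1 : R)) (hW w) (by
      intro z hz
      have := hq z ((hT z).1 hz)
      rw [finsum_eq_sum_of_fintype] at this
      simp [this])
    simp only [one_smul] at this
    rw [finsum_eq_sum_of_fintype w, this, finsum_mem_def, finsum_eq_sum_of_fintype]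
    apply Finset.sum_congr rfl
    intro y _
    by_cases hy : y ∈ G.roots <;> simp [hT, hy]
  · intro r hr h0
    rw [h1 w r hr]
    apply finsum_eq_zero_of_forall_eq_zero
    intro y
    by_cases hy : y ∈ G.desc r
    · rw [h0 y hy, smul_zero]
    · rw [hs.1 r y hy, zero_smul]
  · intro c₁ c₂ v₁ v₂ w₁ w₂ w₁₂ hv₁ hv₂ hv₁₂ r hr
    rw [h1 _ r hr, h1 _ r hr, h1 _ r hr]
    simp only [finsum_eq_sum_of_fintype, Finset.smul_sum]
    rw [← Finset.sum_add_distrib]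
    apply Finset.sum_congr rfl
    intro y _
    rw [MGraph.moebius_lin G hord c₁ c₂ v₁ v₂ w₁ w₂ w₁₂ hv₁ hv₂ hv₁₂ y, smul_add,
      smul_comm (s r y), smul_comm (s r y)]
  · intro S hS lS hlS hlSm l' hl' hlm' r hr
    have hU := MGraph.projIter_sum lS hlS S hlSm (G.pw q) w hac
    have hWw := hW w
    set U := (MGraph.projIter lS (G.pw q) w).2 with hUdef
    set W := (MGraph.projIter l (G.pw q) w).2 with hWdef
    -- the main identity
    have hD : ∀ x, W x = U x +
        ∑ z, if z ∉ G.roots ∧ z ∉ S then G.NW S q x z • W z else 0 := by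
      intro x
      apply MGraph.uniq S (G.pw q) hac
        (fun x => w x + ∑ z, if z ∉ G.roots ∧ z ∉ S then G.pw q x z • W z else 0) W
        (fun x => U x + ∑ z, if z ∉ G.roots ∧ z ∉ S then G.NW S q x z • W z else 0)
      · intro x
        conv_lhs => rw [hWw x]
        rw [add_assoc, ← Finset.sum_add_distrib]
        congr 1
        apply Finset.sum_congr rfl
        intro z _
        by_cases hz : z ∈ S
        · simp [hT, hz, hS z hz]
        · simp [hT, hz]
      · intro x
        conv_lhs => rw [hU x]
        have e1 : ∀ y, (if y ∈ S then G.pw q x y • (U y +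
            ∑ z, if z ∉ G.roots ∧ z ∉ S then G.NW S q y z • W z else 0) else 0)
            = (if y ∈ S then G.pw q x y • U y else 0) +
              ∑ z, if y ∈ S then (if z ∉ G.roots ∧ z ∉ S then
                (G.pw q x y * G.NW S q y z) • W z else 0) else 0 := by
          intro y
          by_cases hy : y ∈ S
          · simp only [hy, if_true, smul_add, Finset.smul_sum, smul_ite, smul_zero, mul_smul]
          · simp [hy]
        simp only [e1, Finset.sum_add_distrib]
        rw [Finset.sum_comm (f := fun y z => if y ∈ S then (if z ∉ G.roots ∧ z ∉ S then
                (G.pw q x y * G.NW S q y z) • W z else 0) else 0)]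
        have e2 : ∀ z, (if z ∉ G.roots ∧ z ∉ S then G.NW S q x z • W z else 0) =
            (if z ∉ G.roots ∧ z ∉ S then G.pw q x z • W z else 0) +
            ∑ y, if y ∈ S then (if z ∉ G.roots ∧ z ∉ S then
                (G.pw q x y * G.NW S q y z) • W z else 0) else 0 := by
          intro z
          by_cases hz : z ∉ G.roots ∧ z ∉ S
          · simp only [hz, not_false_eq_true, and_self, if_true]
            rw [MGraph.NW_rec G S q hord x z, add_smul, Finset.sum_smul]
            simp only [ite_smul, zero_smul]
          · simp only [hz, if_false, ite_self, Finset.sum_const_zero, add_zero]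
        simp only [e2, Finset.sum_add_distrib]
        abel
    have hacN : MGraph.Acyc (fun x : {x : V // x ∉ S} => ord x.1)
        ((G.projG S).pw (G.projQ S q)) := by
      intro x y hxy
      rw [MGraph.projG_pw]
      exact MGraph.acyc_NW G S q hord _ _ hxy
    obtain ⟨T', hT'⟩ : ∃ T' : Set {x : V // x ∉ S}, ∀ z, z ∈ T' ↔ z ∉ (G.projG S).roots :=
      ⟨(G.projG S).rootsᶜ, fun _ => Iff.rfl⟩
    have hZ := MGraph.projIter_sum l' hl' T' (fun z => (hlm' z).trans (hT' z).symm) ((G.projG S).pw (G.projQ S q))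
      (fun x => U x.1) hacN
    refine MGraph.uniq (V := {x : V // x ∉ S}) _ _ hacN (fun x => U x.1) (fun x => W x.1) _
      ?_ hZ ⟨r, fun hmemS => hS r hmemS hr⟩
    intro x
    rw [hD x.1]
    congr 1
    have e3 : ∀ f : V → A, (∑ z, if z ∉ G.roots ∧ z ∉ S then f z else 0) =
        ∑ z : {x : V // x ∉ S}, if z.1 ∉ G.roots then f z.1 else 0 := by
      intro f
      rw [← Finset.sum_subtype (Finset.univ.filter (fun z => z ∉ S)) (by simp)
        (fun z => if z ∉ G.roots then f z else 0), Finset.sum_filter]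
      apply Finset.sum_congr rfl
      intro z _
      by_cases hz : z ∈ S <;> simp [hz]
    rw [e3]
    apply Finset.sum_congr rfl
    intro z _
    rw [MGraph.projG_pw]
    by_cases hz : z ∈ (G.projG S).roots
    · have : G.NW S q x.1 z.1 = 0 := by
        rw [← MGraph.projG_pw]
        apply MGraph.pw_eq_zero
        rw [show (G.projG S).pa z = ∅ from hz]
        simp
      simp [this]
    · have hz' : z.1 ∉ G.roots := fun h => hz (MGraph.projG_root G S z h)
      rw [if_pos hz']
      exact (if_pos ((hT' z).2 hz)).symm
end
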